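/- Let μ ∈ ℂ∖{0} and η ∈ ℂ∖{0}. There exist f, g, f′, g′ ∈ V₁(μ) and a nonzero constant c ∈ ℂ such that A(f)∘A(g) − A(f′)∘A(g′) = c·Id as linear operators on the space of functions ℂ → ℂ. In particular, the constant multiples of the identity operator form a subspace of 𝒱₂(μ). -/

import Mathlib

open Complex Filter

noncomputable section

/-- A meromorphic function is regular (analytic after removing a removable
singularity) at a point. -/
def RegularAt (g : ℂ → ℂ) (p : ℂ) : Prop :=
  ∃ h : ℂ → ℂ, AnalyticAt ℂ h p ∧ ∀ᶠ z in nhdsWithin p {p}ᶜ, g z = h z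

/-- `g` has at most a simple pole at `p`, with residue `r`. -/
def SimplePoleAt (g : ℂ → ℂ) (p r : ℂ) : Prop :=
  ∃ h : ℂ → ℂ, AnalyticAt ℂ h p ∧ ∀ᶠ z in nhdsWithin p {p}ᶜ, g z = r / (z - p) + h z

/-- `p` belongs to the half-lattice `Λ/2 = {(m+nτ)/2 : m,n ∈ ℤ}`. -/
def HalfLattice (τ p : ℂ) : Prop := ∃ m n : ℤ, p = ((m : ℂ) + τ * n) / 2

/-- Membership in `V₁(μ)`: meromorphic, `f(z+1)=f(z)`, `f(z+τ)=μf(z)`, with at most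
simple poles, all lying in `Λ/2`. -/
def memV1 (τ μ : ℂ) (f : ℂ → ℂ) : Prop :=
  MeromorphicOn f Set.univ ∧ (∀ z, f (z + 1) = f z) ∧ (∀ z, f (z + τ) = μ * f z) ∧
  (∀ p : ℂ, ¬ HalfLattice τ p → RegularAt f p) ∧
  (∀ p : ℂ, HalfLattice τ p → ∃ r : ℂ, SimplePoleAt f p r)

/-- The analytic difference operator `A(f)`, `(A(f)F)(z) = f(z)F(z+η) + f(−z)F(z−η)`. -/
def ADO (η : ℂ) (f : ℂ → ℂ) : Module.End ℂ (ℂ → ℂ) where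
  toFun F := fun z => f z * F (z + η) + f (-z) * F (z - η)
  map_add' F G := by funext z; simp [Pi.add_apply]; ring
  map_smul' c F := by funext z; simp [Pi.smul_apply, smul_eq_mul]; ring

/-- `𝒱_k(μ)`: the linear span of the `k`-fold products `A(f₁)∘⋯∘A(f_k)` with
`f₁,…,f_k ∈ V₁(μ)`. -/
def Vcal (τ μ η : ℂ) (k : ℕ) : Submodule ℂ (Module.End ℂ (ℂ → ℂ)) :=
  Submodule.span ℂ {T | ∃ f : Fin k → (ℂ → ℂ), (∀ i, memV1 τ μ (f i)) ∧
    T = (List.ofFn fun i => ADO η (f i)).prod}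

/-- The normalised exponential `z ↦ exp (2πiz)`. -/
def fourierExp (z : ℂ) : ℂ := exp (2 * Real.pi * I * z)

lemma fourierExp_add (z w : ℂ) : fourierExp (z + w) = fourierExp z * fourierExp w := by
  simp [fourierExp, mul_add, exp_add]

lemma fourierExp_ne_zero (z : ℂ) : fourierExp z ≠ 0 := exp_ne_zero _

lemma fourierExp_int (n : ℤ) : fourierExp n = 1 :=
  exp_eq_one_iff.2 ⟨n, by ring⟩

lemma fourierExp_one : fourierExp 1 = 1 := by simpa using fourierExp_int 1

lemma fourierExp_zero : fourierExp 0 = 1 := by simp [fourierExp]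

lemma fourierExp_neg_mul (z : ℂ) : fourierExp (-z) * fourierExp z = 1 := by
  rw [← fourierExp_add, neg_add_cancel, fourierExp_zero]

lemma fourierExp_eq_one_iff {z : ℂ} : fourierExp z = 1 ↔ ∃ n : ℤ, z = n := by
  refine ⟨fun h => ?_, ?_⟩
  · obtain ⟨n, hn⟩ := exp_eq_one_iff.1 h
    refine ⟨n, mul_right_cancel₀ Complex.two_pi_I_ne_zero ?_⟩
    linear_combination hn
  · rintro ⟨n, rfl⟩
    exact fourierExp_int n

lemma exists_fourierExp_eq {μ : ℂ} (hμ : μ ≠ 0) : ∃ z, fourierExp z = μ := by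
  refine ⟨log μ / (2 * Real.pi * I), ?_⟩
  rw [fourierExp, mul_div_cancel₀ _ Complex.two_pi_I_ne_zero, exp_log hμ]

lemma fourierExp_nat_mul (n : ℕ) (z : ℂ) : fourierExp (n * z) = fourierExp z ^ n := by
  rw [fourierExp, fourierExp, ← exp_nat_mul]
  congr 1
  ring

@[fun_prop]
lemma differentiable_fourierExp : Differentiable ℂ fourierExp := by
  unfold fourierExp
  fun_prop

lemma hasDerivAt_fourierExp (z : ℂ) :
    HasDerivAt fourierExp (2 * Real.pi * I * fourierExp z) z := by
  have := ((hasDerivAt_id z).const_mul (2 * Real.pi * I : ℂ)).cexp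
  rw [mul_comm]
  simpa only [mul_one, id] using! this

lemma norm_fourierExp_lt_one {τ : ℂ} (hτ : 0 < τ.im) : ‖fourierExp τ‖ < 1 := by
  rw [fourierExp, norm_exp, Real.exp_lt_one_iff]
  have : (2 * Real.pi * I * τ : ℂ).re = -(2 * Real.pi * τ.im) := by simp
  rw [this]
  have := Real.pi_pos
  have : 0 < 2 * Real.pi * τ.im := by positivity
  linarith

/-- The infinite product `∏ (1 - q ^ n * y)`. -/
def qProduct (q y : ℂ) : ℂ := ∏' n : ℕ, (1 + -(q ^ n * y))

lemma summable_norm_pow_mul {q : ℂ} (hq : ‖q‖ < 1) (y : ℂ) :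
    Summable fun n : ℕ => ‖-(q ^ n * y)‖ := by
  simpa using (summable_geometric_of_lt_one (norm_nonneg _) hq).mul_right ‖y‖

lemma qProduct_eq {q : ℂ} (hq : ‖q‖ < 1) (y : ℂ) :
    qProduct q y = (1 - y) * qProduct q (q * y) := by
  unfold qProduct
  rw [tprod_eq_zero_mul']
  · simp [pow_succ, mul_assoc, sub_eq_add_neg]
  · have h := summable_norm_pow_mul hq (q * y)
    simpa [pow_succ, mul_assoc] using multipliable_one_add_of_summable h

lemma qProduct_ne_zero {q : ℂ} (hq : ‖q‖ < 1) {y : ℂ} (h : ∀ n : ℕ, q ^ n * y ≠ 1) :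
    qProduct q y ≠ 0 := by
  refine tprod_one_add_ne_zero_of_summable (fun n h0 => h n ?_) (summable_norm_pow_mul hq y)
  linear_combination -h0

lemma differentiable_qProduct {q : ℂ} (hq : ‖q‖ < 1) : Differentiable ℂ (qProduct q) := by
  have key : HasProdLocallyUniformlyOn (fun (n : ℕ) y => 1 + -(q ^ n * y)) (qProduct q)
      Set.univ := by
    refine hasProdLocallyUniformlyOn_of_forall_compact isOpen_univ fun K _ hK => ?_
    obtain ⟨C, hC⟩ := hK.isBounded.exists_norm_le
    refine ((summable_geometric_of_lt_one (norm_nonneg _) hq).mul_right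
      C).hasProdUniformlyOn_nat_one_add hK (.of_forall fun n x hx => ?_) (fun _ => by fun_prop)
    rw [norm_neg, norm_mul, norm_pow]
    gcongr
    exact hC x hx
  rw [← differentiableOn_univ]
  exact key.differentiableOn (.of_forall fun _ => by
    simpa [Finset.prod_fn] using DifferentiableOn.finsetProd (fun _ _ => by fun_prop)) isOpen_univ

/-- The period lattice `ℤ + τℤ`. -/
def PeriodLattice (τ p : ℂ) : Prop := ∃ m n : ℤ, p = m + τ * n

/-- The multiplicative theta function `∏ (1 - q ^ n * x) * ∏ (1 - q ^ (n + 1) / x)`, where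
`x = exp (2πiz)` and `q = exp (2πiτ)`. -/
def prodTheta (τ z : ℂ) : ℂ :=
  qProduct (fourierExp τ) (fourierExp z) * qProduct (fourierExp τ) (fourierExp (τ - z))

section theta

variable {τ : ℂ}

lemma differentiable_prodTheta (hτ : 0 < τ.im) : Differentiable ℂ (prodTheta τ) := by
  have := differentiable_qProduct (norm_fourierExp_lt_one hτ)
  unfold prodTheta
  fun_prop

lemma prodTheta_add_one (z : ℂ) : prodTheta τ (z + 1) = prodTheta τ z := by
  have : fourierExp (τ - (z + 1)) = fourierExp (τ - z) := by
    rw [show τ - z = τ - (z + 1) + 1 by ring, fourierExp_add _ 1, fourierExp_one, mul_one]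
  rw [prodTheta, prodTheta, this, fourierExp_add, fourierExp_one, mul_one]

lemma prodTheta_add_tau (hτ : 0 < τ.im) (z : ℂ) :
    prodTheta τ (z + τ) = -fourierExp (-z) * prodTheta τ z := by
  have hq := norm_fourierExp_lt_one hτ
  have h1 := qProduct_eq hq (fourierExp z)
  have h2 := qProduct_eq hq (fourierExp (-z))
  rw [← fourierExp_add] at h1 h2
  rw [prodTheta, prodTheta, h1, show τ - (z + τ) = -z by ring, h2, add_comm z τ,
    ← sub_eq_add_neg]
  linear_combination (qProduct (fourierExp τ) (fourierExp (τ + z)) *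
    qProduct (fourierExp τ) (fourierExp (τ - z))) * (-fourierExp_neg_mul z)

lemma prodTheta_neg (hτ : 0 < τ.im) (z : ℂ) :
    prodTheta τ (-z) = -fourierExp (-z) * prodTheta τ z := by
  rw [← prodTheta_add_tau hτ, prodTheta, prodTheta, mul_comm, show τ - (z + τ) = -z by ring,
    show τ - -z = z + τ by ring]

lemma exists_of_prodTheta_eq_zero (hτ : 0 < τ.im) {z : ℂ} (h : prodTheta τ z = 0) :
    PeriodLattice τ z := by
  have hq := norm_fourierExp_lt_one hτ
  have key : ∀ w, qProduct (fourierExp τ) (fourierExp w) = 0 →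
      ∃ (n : ℕ) (m : ℤ), n * τ + w = m := by
    intro w hw
    by_contra! hne
    refine qProduct_ne_zero hq (fun n hn => ?_) hw
    rw [← fourierExp_nat_mul, ← fourierExp_add, fourierExp_eq_one_iff] at hn
    exact hn.elim (hne n)
  rcases mul_eq_zero.1 h with h | h
  · obtain ⟨n, m, hm⟩ := key _ h
    exact ⟨m, -n, by push_cast; linear_combination hm⟩
  · obtain ⟨n, m, hm⟩ := key _ h
    exact ⟨-m, n + 1, by push_cast; linear_combination -hm⟩

lemma simpleZero_prodTheta_add_tau (hτ : 0 < τ.im) (p : ℂ) :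
    (prodTheta τ (p + τ) = 0 ∧ deriv (prodTheta τ) (p + τ) ≠ 0) ↔
      (prodTheta τ p = 0 ∧ deriv (prodTheta τ) p ≠ 0) := by
  have hd := differentiable_prodTheta hτ
  have h0 : prodTheta τ (p + τ) = 0 ↔ prodTheta τ p = 0 := by
    rw [prodTheta_add_tau hτ]
    simp [fourierExp_ne_zero]
  rw [h0]
  refine and_congr_right fun hp => ?_
  have h1 : deriv (prodTheta τ) (p + τ) = -fourierExp (-p) * deriv (prodTheta τ) p := by
    rw [← deriv_comp_add_const, funext (prodTheta_add_tau hτ)]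
    have hf : DifferentiableAt ℂ (fun z => -fourierExp (-z)) p := by
      fun_prop
    have := hf.hasDerivAt.mul (hd p).hasDerivAt
    rw [hp, mul_zero, zero_add] at this
    exact this.deriv
  rw [h1]
  simp [fourierExp_ne_zero]

lemma simpleZero_prodTheta_zero (hτ : 0 < τ.im) :
    prodTheta τ 0 = 0 ∧ deriv (prodTheta τ) 0 ≠ 0 := by
  have hq := norm_fourierExp_lt_one hτ
  have hP := differentiable_qProduct hq
  have hfun : prodTheta τ = fun z => (1 - fourierExp z) *
      (qProduct (fourierExp τ) (fourierExp (τ + z)) *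
        qProduct (fourierExp τ) (fourierExp (τ - z))) := by
    funext z
    rw [prodTheta, qProduct_eq hq, ← fourierExp_add, mul_assoc]
  refine ⟨by rw [hfun]; simp [fourierExp_zero], ?_⟩
  have h1 : HasDerivAt (fun z => 1 - fourierExp z) (-(2 * Real.pi * I)) 0 := by
    simpa [fourierExp_zero] using (hasDerivAt_fourierExp 0).const_sub 1
  have h2 : DifferentiableAt ℂ (fun z => qProduct (fourierExp τ) (fourierExp (τ + z)) *
        qProduct (fourierExp τ) (fourierExp (τ - z))) 0 := by
    fun_prop
  have hne : qProduct (fourierExp τ) (fourierExp τ) ≠ 0 := by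
    refine qProduct_ne_zero hq fun n hn => ?_
    rw [← pow_succ] at hn
    have := pow_lt_one₀ (norm_nonneg _) hq n.succ_ne_zero
    rw [← norm_pow, Nat.succ_eq_add_one, hn, norm_one] at this
    exact lt_irrefl _ this
  rw [hfun, (h1.fun_mul h2.hasDerivAt).deriv]
  simp [fourierExp_zero, hne, I_ne_zero, Real.pi_ne_zero]

lemma simpleZero_prodTheta (hτ : 0 < τ.im) {p : ℂ} (hp : PeriodLattice τ p) :
    prodTheta τ p = 0 ∧ deriv (prodTheta τ) p ≠ 0 := by
  obtain ⟨m, n, rfl⟩ := hp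
  have hper : ∀ z, prodTheta τ (z + m) = prodTheta τ z := fun z => by
    have := (show Function.Periodic (prodTheta τ) 1 from prodTheta_add_one).int_mul m z
    simpa using this
  have hder : deriv (prodTheta τ) (m + τ * n) = deriv (prodTheta τ) (τ * n) := by
    rw [add_comm, ← deriv_comp_add_const, funext hper]
  rw [hder, add_comm, hper]
  clear hder
  induction n with
  | zero => simpa using simpleZero_prodTheta_zero hτ
  | succ k ih =>
    rw [← simpleZero_prodTheta_add_tau hτ] at ih
    convert ih using 3 <;> push_cast <;> ring_nf
  | pred k ih =>
    rw [← simpleZero_prodTheta_add_tau hτ]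
    convert ih using 3 <;> push_cast <;> ring_nf

lemma prodTheta_eq_zero_iff (hτ : 0 < τ.im) {p : ℂ} : prodTheta τ p = 0 ↔ PeriodLattice τ p :=
  ⟨exists_of_prodTheta_eq_zero hτ, fun h => (simpleZero_prodTheta hτ h).1⟩

end theta

section quotient

lemma Differentiable.dslope {f : ℂ → ℂ} (hf : Differentiable ℂ f) (p : ℂ) :
    Differentiable ℂ (dslope f p) := by
  rw [← differentiableOn_univ, Complex.differentiableOn_dslope univ_mem]
  exact hf.differentiableOn

lemma eq_sub_mul_dslope {f : ℂ → ℂ} {p : ℂ} (h : f p = 0) (z : ℂ) :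
    f z = (z - p) * dslope f p z := by
  have := sub_smul_dslope f p z
  rw [smul_eq_mul, h, sub_zero] at this
  exact this.symm

lemma exists_eq_mul_of_simple_zeros {N D : ℂ → ℂ} (hN : Differentiable ℂ N)
    (hD : Differentiable ℂ D) (hz : ∀ z, D z = 0 → deriv D z ≠ 0 ∧ N z = 0) :
    ∃ h : ℂ → ℂ, Differentiable ℂ h ∧ ∀ z, N z = h z * D z := by
  classical
  refine ⟨fun z => if D z = 0 then deriv N z / deriv D z else N z / D z, fun p => ?_,
    fun z => ?_⟩
  · by_cases hp : D p = 0
    · obtain ⟨hd, hn⟩ := hz p hp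
      have hne : dslope D p p ≠ 0 := by rwa [dslope_same]
      have hev : ∀ᶠ z in nhds p, dslope D p z ≠ 0 :=
        (hD.dslope p).continuous.continuousAt.eventually_ne hne
      refine DifferentiableAt.congr_of_eventuallyEq
        ((hN.dslope p p).div (hD.dslope p p) hne) ?_
      filter_upwards [hev] with z hz'
      rcases eq_or_ne z p with rfl | hzp
      · simp [hp, dslope_same]
      · have hsub := sub_ne_zero.2 hzp
        have hDz : D z ≠ 0 := by
          rw [eq_sub_mul_dslope hp]
          exact mul_ne_zero hsub hz'
        rw [if_neg hDz, eq_sub_mul_dslope hp z, eq_sub_mul_dslope hn z,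
          mul_div_mul_left _ _ hsub, Pi.div_apply]
    · have hev : ∀ᶠ z in nhds p, D z ≠ 0 := hD.continuous.continuousAt.eventually_ne hp
      refine DifferentiableAt.congr_of_eventuallyEq ((hN p).div (hD p) hp) ?_
      filter_upwards [hev] with z hz'
      rw [if_neg hz', Pi.div_apply]
  · by_cases hp : D z = 0
    · simp [hp, (hz z hp).2]
    · simp [hp]

lemma exists_simplePoleAt_div {N D : ℂ → ℂ} (hN : Differentiable ℂ N)
    (hD : Differentiable ℂ D) {p : ℂ} (h0 : D p = 0) (h1 : deriv D p ≠ 0) :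
    ∃ r, SimplePoleAt (fun z => N z / D z) p r := by
  set r := N p / deriv D p
  have hne : dslope D p p ≠ 0 := by rwa [dslope_same]
  set E : ℂ → ℂ := fun z => N z - r * dslope D p z
  have hE : Differentiable ℂ E := hN.sub ((hD.dslope p).const_mul r)
  have hE0 : E p = 0 := by simp [E, r, dslope_same, h1]
  refine ⟨r, fun z => dslope E p z / dslope D p z,
    ((hE.dslope p).analyticAt p).div ((hD.dslope p).analyticAt p) hne, ?_⟩
  have hev : ∀ᶠ z in nhds p, dslope D p z ≠ 0 :=
    (hD.dslope p).continuous.continuousAt.eventually_ne hne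
  filter_upwards [hev.filter_mono nhdsWithin_le_nhds, self_mem_nhdsWithin] with z hz hzp
  have hsub : z - p ≠ 0 := sub_ne_zero.2 hzp
  have hNz : N z = r * dslope D p z + (z - p) * dslope E p z := by
    rw [← eq_sub_mul_dslope hE0]
    simp only [E]
    ring
  rw [hNz, eq_sub_mul_dslope h0 z]
  field_simp

lemma apply_eq_apply_of_doubly_periodic {τ : ℂ} (hτ : 0 < τ.im) {h : ℂ → ℂ}
    (hd : Differentiable ℂ h) (h1 : ∀ z, h (z + 1) = h z) (h2 : ∀ z, h (z + τ) = h z)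
    (z w : ℂ) : h z = h w := by
  refine hd.apply_eq_apply_of_bounded ?_ z w
  set K : Set ℂ := (fun x : ℝ × ℝ => (x.1 + x.2 * τ : ℂ)) '' (Set.Icc 0 1 ×ˢ Set.Icc 0 1)
  have hK : IsCompact K :=
    (isCompact_Icc.prod isCompact_Icc).image (by fun_prop)
  refine (hK.image hd.continuous).isBounded.subset ?_
  rintro _ ⟨z, rfl⟩
  set t := z.im / τ.im
  set s := z.re - t * τ.re
  have hz : z = s + t * τ := by
    apply Complex.ext
    · simp [s]
    · simp [t, hτ.ne']
  have hper : h (Int.fract s + Int.fract t * τ) = h z := by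
    have e1 := (show Function.Periodic h 1 from h1).int_mul ⌊s⌋
    have e2 := (show Function.Periodic h τ from h2).int_mul ⌊t⌋
    rw [← e1, ← e2]
    congr 1
    rw [hz, mul_one, ← Complex.ofReal_intCast, ← Complex.ofReal_intCast, Int.fract, Int.fract]
    push_cast
    ring
  rw [← hper]
  exact ⟨_, ⟨(Int.fract s, Int.fract t), ⟨⟨Int.fract_nonneg _, (Int.fract_lt_one _).le⟩,
    ⟨Int.fract_nonneg _, (Int.fract_lt_one _).le⟩⟩, rfl⟩, rfl⟩

end quotient

/-- Entire `1`-periodic functions `N` with `N (z + τ) = exp (2πi(α - dz)) * N z`. -/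
structure IsThetaFunction (τ : ℂ) (d : ℕ) (α : ℂ) (N : ℂ → ℂ) : Prop where
  differentiable : Differentiable ℂ N
  add_one : ∀ z, N (z + 1) = N z
  add_tau : ∀ z, N (z + τ) = fourierExp (α - d * z) * N z

namespace IsThetaFunction

variable {τ α β : ℂ} {d k : ℕ} {M N : ℂ → ℂ}

lemma mul (hM : IsThetaFunction τ d α M) (hN : IsThetaFunction τ k β N) :
    IsThetaFunction τ (d + k) (α + β) fun z => M z * N z where
  differentiable := hM.differentiable.mul hN.differentiable
  add_one z := by rw [hM.add_one, hN.add_one]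
  add_tau z := by
    rw [hM.add_tau, hN.add_tau, show α + β - ((d + k : ℕ) : ℂ) * z = α - d * z + (β - k * z) by
      push_cast; ring, fourierExp_add]
    ring

lemma comp_add_const (hN : IsThetaFunction τ d α N) (η : ℂ) :
    IsThetaFunction τ d (α - d * η) fun z => N (z + η) where
  differentiable := hN.differentiable.comp (by fun_prop)
  add_one z := by rw [add_right_comm, hN.add_one]
  add_tau z := by
    rw [add_right_comm, hN.add_tau]
    congr 2
    ring

lemma neg_add_tau (hN : IsThetaFunction τ d α N) (z : ℂ) :
    N (-(z + τ)) = fourierExp (-α - d * (z + τ)) * N (-z) := by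
  have h := hN.add_tau (-(z + τ))
  rw [show -(z + τ) + τ = -z by ring] at h
  rw [h, ← mul_assoc, ← fourierExp_add, show -α - d * (z + τ) + (α - d * -(z + τ)) = 0 by ring,
    fourierExp_zero, one_mul]

lemma neg_add_one (hN : IsThetaFunction τ d α N) (z : ℂ) : N (-(z + 1)) = N (-z) := by
  rw [← hN.add_one, show -(z + 1) + 1 = -z by ring]

lemma add_int_mul_tau (hN : IsThetaFunction τ 4 (-2 * τ) N) (n : ℤ) (z : ℂ) :
    N (z + n * τ) = fourierExp (-4 * n * z - 2 * n ^ 2 * τ) * N z := by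
  induction n with
  | zero => simp [fourierExp_zero]
  | succ k ih =>
    have h := hN.add_tau (z + k * τ)
    push_cast at ih h ⊢
    rw [ih, ← mul_assoc, ← fourierExp_add] at h
    rw [show z + (k + 1) * τ = z + k * τ + τ by ring, h]
    congr 2
    ring
  | pred k ih =>
    have h := hN.add_tau (z + (-k - 1) * τ)
    push_cast at ih h ⊢
    rw [show z + (-k - 1) * τ + τ = z + -k * τ by ring, ih] at h
    refine mul_left_cancel₀ (fourierExp_ne_zero (-2 * τ - 4 * (z + (-k - 1) * τ))) ?_
    rw [← h, ← mul_assoc, ← fourierExp_add]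
    congr 2
    ring

lemma eq_zero_of_halfLattice (hN : IsThetaFunction τ 4 (-2 * τ) N)
    (hodd : ∀ z, N (-z) = -N z) {p : ℂ} (hp : HalfLattice τ p) : N p = 0 := by
  obtain ⟨m, n, hp⟩ := hp
  have h1 : N p = N (-p + n * τ) := by
    have := (show Function.Periodic N 1 from hN.add_one).int_mul m (-p + n * τ)
    rw [← this]
    congr 1
    rw [hp]
    ring
  have h2 : -4 * n * -p - 2 * n ^ 2 * τ = ((2 * n * m : ℤ) : ℂ) := by
    rw [hp]
    push_cast
    ring
  rw [hN.add_int_mul_tau, h2, fourierExp_int, one_mul, hodd] at h1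
  exact self_eq_neg.1 h1

end IsThetaFunction

/-- The odd degree-four theta function with simple zeros at the half-lattice points. -/
def halfTheta (τ z : ℂ) : ℂ := fourierExp (-z) * prodTheta τ (2 * z)

section halfTheta

variable {τ : ℂ}

lemma halfTheta_neg (hτ : 0 < τ.im) (z : ℂ) : halfTheta τ (-z) = -halfTheta τ z := by
  rw [halfTheta, halfTheta, mul_neg, prodTheta_neg hτ, neg_neg, neg_mul, mul_neg, ← mul_assoc,
    ← fourierExp_add]
  congr 3
  ring

lemma isThetaFunction_halfTheta (hτ : 0 < τ.im) :
    IsThetaFunction τ 4 (-2 * τ) (halfTheta τ) where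
  differentiable := by
    have := differentiable_prodTheta hτ
    unfold halfTheta
    fun_prop
  add_one z := by
    rw [halfTheta, halfTheta, show 2 * (z + 1) = 2 * z + 1 + 1 by ring, prodTheta_add_one,
      prodTheta_add_one, show -z = -(z + 1) + 1 by ring, fourierExp_add _ 1, fourierExp_one,
      mul_one]
  add_tau z := by
    rw [halfTheta, halfTheta, show 2 * (z + τ) = 2 * z + τ + τ by ring, prodTheta_add_tau hτ,
      prodTheta_add_tau hτ]
    have : fourierExp (-(z + τ)) * (fourierExp (-(2 * z + τ)) * fourierExp (-(2 * z))) =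
        fourierExp (-2 * τ - (4 : ℕ) * z) * fourierExp (-z) := by
      simp only [← fourierExp_add]
      congr 1
      push_cast
      ring
    linear_combination prodTheta τ (2 * z) * this

lemma halfTheta_eq_zero_iff (hτ : 0 < τ.im) {z : ℂ} : halfTheta τ z = 0 ↔ HalfLattice τ z := by
  rw [halfTheta, mul_eq_zero, or_iff_right (fourierExp_ne_zero _), prodTheta_eq_zero_iff hτ]
  exact exists₂_congr fun m n =>
    ⟨fun h => by linear_combination h / 2, fun h => by linear_combination 2 * h⟩

lemma deriv_halfTheta_ne_zero (hτ : 0 < τ.im) {z : ℂ} (hz : HalfLattice τ z) :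
    deriv (halfTheta τ) z ≠ 0 := by
  have hd := differentiable_prodTheta hτ
  obtain ⟨m, n, hz⟩ := hz
  obtain ⟨h0, h1⟩ := simpleZero_prodTheta hτ (p := 2 * z) ⟨m, n, by rw [hz]; ring⟩
  have hA : DifferentiableAt ℂ (fun z => fourierExp (-z)) z := by fun_prop
  have hB : HasDerivAt (fun z => prodTheta τ (2 * z)) (deriv (prodTheta τ) (2 * z) * 2) z := by
    simpa using! (hd (2 * z)).hasDerivAt.comp z ((hasDerivAt_id z).const_mul 2)
  have := (hA.hasDerivAt.fun_mul hB).deriv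
  unfold halfTheta
  rw [this, h0]
  simp [h1, fourierExp_ne_zero]

lemma dense_halfTheta_ne_zero (hτ : 0 < τ.im) : Dense {z | halfTheta τ z ≠ 0} := by
  have hc : {z | HalfLattice τ z}.Countable := by
    refine (Set.countable_range fun x : ℤ × ℤ => ((x.1 : ℂ) + τ * x.2) / 2).mono ?_
    rintro _ ⟨m, n, rfl⟩
    exact ⟨(m, n), rfl⟩
  convert! hc.dense_compl ℂ using 1
  ext z
  simp [halfTheta_eq_zero_iff hτ]

lemma exists_eq_const_mul_halfTheta (hτ : 0 < τ.im) {N : ℂ → ℂ}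
    (hN : IsThetaFunction τ 4 (-2 * τ) N) (hodd : ∀ z, N (-z) = -N z) :
    ∃ C, ∀ z, N z = C * halfTheta τ z := by
  have hH := isThetaFunction_halfTheta hτ
  obtain ⟨h, hd, hh⟩ := exists_eq_mul_of_simple_zeros hN.differentiable hH.differentiable
    fun z hz => by
      rw [halfTheta_eq_zero_iff hτ] at hz
      exact ⟨deriv_halfTheta_ne_zero hτ hz, hN.eq_zero_of_halfLattice hodd hz⟩
  have key : ∀ ω : ℂ, (∀ z, halfTheta τ z ≠ 0 → h (z + ω) = h z) → ∀ z, h (z + ω) = h z :=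
    fun ω hω => congrFun <| Continuous.ext_on (dense_halfTheta_ne_zero hτ)
      (hd.continuous.comp (by fun_prop)) hd.continuous hω
  have h1 := key 1 fun z hz => by
    have e := hN.add_one z
    rw [hh, hh, hH.add_one] at e
    exact mul_right_cancel₀ hz e
  have h2 := key τ fun z hz => by
    have e := hN.add_tau z
    rw [hh, hh, hH.add_tau, mul_left_comm] at e
    exact mul_right_cancel₀ hz (mul_left_cancel₀ (fourierExp_ne_zero _) e)
  refine ⟨h 0, fun z => ?_⟩
  rw [hh, apply_eq_apply_of_doubly_periodic hτ hd h1 h2 z 0]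

lemma memV1_div_halfTheta (hτ : 0 < τ.im) {κ : ℂ} {N : ℂ → ℂ} (hN : IsThetaFunction τ 4 κ N) :
    memV1 τ (fourierExp (κ + 2 * τ)) fun z => N z / halfTheta τ z := by
  have hH := isThetaFunction_halfTheta hτ
  refine ⟨fun z _ => (hN.differentiable.analyticAt z).meromorphicAt.div
    (hH.differentiable.analyticAt z).meromorphicAt, fun z => ?_, fun z => ?_, fun p hp => ?_,
    fun p hp => exists_simplePoleAt_div hN.differentiable hH.differentiable
      ((halfTheta_eq_zero_iff hτ).2 hp) (deriv_halfTheta_ne_zero hτ hp)⟩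
  · simp only [hN.add_one, hH.add_one]
  · simp only [hN.add_tau, hH.add_tau]
    rw [show κ - (4 : ℕ) * z = κ + 2 * τ + (-2 * τ - (4 : ℕ) * z) by ring, fourierExp_add,
      mul_assoc, mul_div_assoc, mul_div_mul_left _ _ (fourierExp_ne_zero _)]
  · refine ⟨_, (hN.differentiable.analyticAt p).div (hH.differentiable.analyticAt p) ?_,
      .of_forall fun z => rfl⟩
    rwa [Ne, halfTheta_eq_zero_iff hτ]

end halfTheta

section wronskian

variable {τ : ℂ}

lemma isThetaFunction_prodTheta_sub_mul (hτ : 0 < τ.im) (a b : ℂ) :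
    IsThetaFunction τ 2 (a + b) fun z => prodTheta τ (z - a) * prodTheta τ (z - b) where
  differentiable := by
    have := differentiable_prodTheta hτ
    fun_prop
  add_one z := by
    rw [add_sub_right_comm, add_sub_right_comm, prodTheta_add_one, prodTheta_add_one]
  add_tau z := by
    rw [add_sub_right_comm, add_sub_right_comm, prodTheta_add_tau hτ, prodTheta_add_tau hτ,
      show a + b - (2 : ℕ) * z = -(z - a) + -(z - b) by push_cast; ring, fourierExp_add]
    ring

lemma IsThetaFunction.wronskian {α : ℂ} {Q R : ℂ → ℂ} (hQ : IsThetaFunction τ 2 α Q)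
    (hR : IsThetaFunction τ 2 α R) :
    IsThetaFunction τ 4 (-2 * τ) fun z => Q z * R (-z) - R z * Q (-z) where
  differentiable := by
    have := hQ.differentiable
    have := hR.differentiable
    fun_prop
  add_one z := by rw [hQ.add_one, hR.add_one, hQ.neg_add_one, hR.neg_add_one]
  add_tau z := by
    rw [hQ.add_tau, hR.add_tau, hQ.neg_add_tau, hR.neg_add_tau,
      show -2 * τ - (4 : ℕ) * z = α - (2 : ℕ) * z + (-α - (2 : ℕ) * (z + τ)) by push_cast; ring,
      fourierExp_add]
    ring

lemma not_periodLattice_ofReal (hτ : 0 < τ.im) {t : ℝ} (ht : ∀ m : ℤ, t ≠ m) :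
    ¬ PeriodLattice τ t := by
  rintro ⟨m, n, h⟩
  have him := congrArg Complex.im h
  have hre := congrArg Complex.re h
  simp only [ofReal_im, ofReal_re, add_im, add_re, mul_im, mul_re, intCast_im, intCast_re,
    mul_zero, zero_add, sub_zero, zero_eq_mul, hτ.ne', false_or] at him hre
  rw [him, mul_zero, add_zero] at hre
  exact ht m hre

lemma exists_not_periodLattice (hτ : 0 < τ.im) (K : ℂ) :
    ∃ t, ¬ PeriodLattice τ t ∧ ¬ PeriodLattice τ (K - t) := by
  have ne_int : ∀ t : ℝ, 0 < t → t < 1 → ∀ m : ℤ, t ≠ m := by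
    rintro t h0 h1 m rfl
    norm_cast at h0 h1
    omega
  have h2 := not_periodLattice_ofReal hτ (ne_int (1 / 2) (by norm_num) (by norm_num))
  have h3 := not_periodLattice_ofReal hτ (ne_int (1 / 3) (by norm_num) (by norm_num))
  have h6 := not_periodLattice_ofReal hτ (ne_int (1 / 6) (by norm_num) (by norm_num))
  by_cases h : PeriodLattice τ (K - (1 / 2 : ℝ))
  · refine ⟨_, h3, fun h' => h6 ?_⟩
    obtain ⟨m, n, h⟩ := h
    obtain ⟨m', n', h'⟩ := h'
    refine ⟨m' - m, n' - n, ?_⟩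
    push_cast at h h' ⊢
    linear_combination h' - h
  · exact ⟨_, h2, h⟩

lemma exists_wronskian_eq (hτ : 0 < τ.im) {α : ℂ} (hα : ¬ PeriodLattice τ α) :
    ∃ Q R : ℂ → ℂ, IsThetaFunction τ 2 α Q ∧ IsThetaFunction τ 2 α R ∧
      ∃ C ≠ 0, ∀ z, Q z * R (-z) - R z * Q (-z) = C * halfTheta τ z := by
  have hneg : ∀ {p}, ¬ PeriodLattice τ p → ¬ PeriodLattice τ (-p) := by
    rintro p hp ⟨m, n, h⟩
    exact hp ⟨-m, -n, by push_cast; linear_combination -h⟩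
  obtain ⟨s, hs, -⟩ := exists_not_periodLattice hτ 0
  set a := s / 2
  have ha : 2 * a = s := by simp only [a]; ring
  obtain ⟨t, ht, ht'⟩ := exists_not_periodLattice hτ (α - s)
  have hQ := isThetaFunction_prodTheta_sub_mul hτ a (α - a)
  have hR := isThetaFunction_prodTheta_sub_mul hτ (a + t) (α - a - t)
  rw [show a + (α - a) = α by ring] at hQ
  rw [show a + t + (α - a - t) = α by ring] at hR
  obtain ⟨C, hC⟩ := exists_eq_const_mul_halfTheta hτ (hQ.wronskian hR) fun z => by
    rw [neg_neg]
    ring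
  refine ⟨_, _, hQ, hR, C, ?_, hC⟩
  rintro rfl
  have h := hC a
  have h0 : prodTheta τ (a - a) = 0 := by
    rw [sub_self]
    exact (simpleZero_prodTheta_zero hτ).1
  rw [h0, zero_mul, zero_mul, zero_sub, zero_mul, neg_eq_zero,
    show a - (a + t) = -t by ring, show a - (α - a - t) = -(α - s - t) by rw [← ha]; ring,
    show -a - a = -s by rw [← ha]; ring, show -a - (α - a) = -α by ring] at h
  simp only [mul_eq_zero, prodTheta_eq_zero_iff hτ] at h
  rcases h with (h | h) | (h | h)
  exacts [hneg ht h, hneg ht' h, hneg hs h, hneg hα h]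

end wronskian

lemma exists_ADO_mul_sub_mul_eq (τ : ℂ) (hτ : 0 < τ.im) (μ : ℂ) (hμ : μ ≠ 0) (η : ℂ) :
    ∃ f g f' g' : ℂ → ℂ, memV1 τ μ f ∧ memV1 τ μ g ∧ memV1 τ μ f' ∧ memV1 τ μ g' ∧
      ∃ c : ℂ, c ≠ 0 ∧ ∀ F : ℂ → ℂ, ∀ z : ℂ,
        ¬ HalfLattice τ z → ¬ HalfLattice τ (z + η) → ¬ HalfLattice τ (z - η) →
        ((ADO η f * ADO η g - ADO η f' * ADO η g') F) z = c * F z := by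
  obtain ⟨κ, rfl⟩ := exists_fourierExp_eq hμ
  obtain ⟨α, hα, hβ⟩ := exists_not_periodLattice hτ (κ - 2 * τ + 2 * η)
  set β := κ - 2 * τ + 2 * η - α
  obtain ⟨P, S, hP, hS, C, hC, hPS⟩ := exists_wronskian_eq hτ hα
  obtain ⟨Q, R, hQ, hR, C', hC', hQR⟩ := exists_wronskian_eq hτ hβ
  have mem : ∀ {α' β' M N}, IsThetaFunction τ 2 α' M → IsThetaFunction τ 2 β' N →
      α' + β' = α + β →
      memV1 τ (fourierExp κ) fun z => M z * N (z + η) / halfTheta τ z := by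
    intro α' β' M N hM hN h
    have := memV1_div_halfTheta hτ (hM.mul (hN.comp_add_const η))
    rwa [show α' + (β' - (2 : ℕ) * η) + 2 * τ = κ by
      push_cast; simp only [β] at h; linear_combination h] at this
  refine ⟨_, _, _, _, mem hP hQ rfl, mem hR hS (add_comm _ _), mem hP hR rfl,
    mem hQ hS (add_comm _ _), -(C * C'), neg_ne_zero.2 (mul_ne_zero hC hC'),
    fun F z h0 h1 h2 => ?_⟩
  rw [← halfTheta_eq_zero_iff hτ] at h0 h1 h2
  simp only [ADO, LinearMap.sub_apply, Module.End.mul_apply, LinearMap.coe_mk, AddHom.coe_mk,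
    Pi.sub_apply]
  have e1 := hQR (z + η)
  have e2 := hQR (-z + η)
  have e3 := hPS z
  have d1 : halfTheta τ (-(z + η)) = -halfTheta τ (z + η) := halfTheta_neg hτ _
  have d2 : halfTheta τ (-(z - η)) = -halfTheta τ (z - η) := halfTheta_neg hτ _
  have d3 : halfTheta τ (-z + η) = -halfTheta τ (z - η) := by rw [← d2]; congr 1; ring
  rw [d3, show -(-z + η) = z - η by ring] at e2
  rw [d1, d2, halfTheta_neg hτ z, show -(z + η) + η = -z by ring,
    show -(z - η) + η = -z + η + η by ring, show -(z - η) = -z + η by ring,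
    show z + η - η = z by ring, show z - η + η = z by ring]
  field_simp
  linear_combination -P z * S (-z) * F z * halfTheta τ (z - η) * e1 -
    halfTheta τ (z + η) * P (-z) * S z * F z * e2 -
    F z * C' * halfTheta τ (z + η) * halfTheta τ (z - η) * e3

/-- there exist `f, g, f′, g′ ∈ V₁(μ)` and a nonzero constant `c` with
`A(f)∘A(g) − A(f′)∘A(g′) = c·Id` (as operators, i.e. pointwise away from the
half-lattice points where the meromorphic coefficients have their poles);
in particular the constant multiples of the identity form a subspace of `𝒱₂(μ)`. -/
theorem statement3 (τ : ℂ) (hτ : 0 < τ.im) (μ : ℂ) (hμ : μ ≠ 0) (η : ℂ) (hη : η ≠ 0) :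
    (∃ f g f' g' : ℂ → ℂ, memV1 τ μ f ∧ memV1 τ μ g ∧ memV1 τ μ f' ∧ memV1 τ μ g' ∧
      ∃ c : ℂ, c ≠ 0 ∧ ∀ F : ℂ → ℂ, ∀ z : ℂ,
        ¬ HalfLattice τ z → ¬ HalfLattice τ (z + η) → ¬ HalfLattice τ (z - η) →
        ((ADO η f * ADO η g - ADO η f' * ADO η g') F) z = c * F z) ∧
    (∀ c : ℂ, ∃ T ∈ Vcal τ μ η 2, ∀ F : ℂ → ℂ, ∀ z : ℂ,
        ¬ HalfLattice τ z → ¬ HalfLattice τ (z + η) → ¬ HalfLattice τ (z - η) →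
        (T F) z = c * F z) := by
  obtain ⟨f, g, f', g', hf, hg, hf', hg', c₀, hc₀, h⟩ := exists_ADO_mul_sub_mul_eq τ hτ μ hμ η
  refine ⟨⟨f, g, f', g', hf, hg, hf', hg', c₀, hc₀, h⟩, fun c =>
    ⟨(c / c₀) • (ADO η f * ADO η g - ADO η f' * ADO η g'), ?_, fun F z h0 h1 h2 => ?_⟩⟩
  · have mem : ∀ {a b}, memV1 τ μ a → memV1 τ μ b → ADO η a * ADO η b ∈ Vcal τ μ η 2 :=
      fun {a b} ha hb => Submodule.subset_span ⟨![a, b], by simp [Fin.forall_fin_two, ha, hb],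
        by simp [List.ofFn_succ]⟩
    exact Submodule.smul_mem _ _ (Submodule.sub_mem _ (mem hf hg) (mem hf' hg'))
  · rw [LinearMap.smul_apply, Pi.smul_apply, h F z h0 h1 h2, smul_eq_mul, ← mul_assoc,
      div_mul_cancel₀ _ hc₀]
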